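/- arXiv:1910.10480 — 2 statements merged into one kernel-verified Lean document; each statement's English description precedes it below -/
import Mathlib

section
/- Fix k ≥ 2 and n ∈ ℕ. Let g ∈ G_n be a minimal representative of its H_n-double coset. If h ∈ H_n ∩ g·H_n·g⁻¹ (i.e. h ∈ H_n and g⁻¹·h·g ∈ H_n), then h maps the H-support [g]_H bijectively onto [g]_H. -/
/-! A block-preserving permutation `h` maps every block *onto* a block, since all blocks have
the same finite cardinality `k`. If `g` maps `Γ_i` onto a block, condition (a) makes that block
`Γ_i` itself; writing `h' = g⁻¹ h g`, with `h(Γ_i) = Γ_l` and `h'(Γ_i) = Γ_m`, this gives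
`g(Γ_m) = h(g(Γ_i)) = h(Γ_i) = Γ_l`, so (a) forces `m = l` and `g` maps `Γ_l = h(Γ_i)` onto
itself. Hence `h` maps the complement of the `H`-support into itself. Inverses of
block-preserving permutations are block-preserving, so the same holds for `h⁻¹`, and therefore
`h` restricts to a bijection of the `H`-support. -/

/-- A permutation of `ℕ` is block-preserving (for block size `k`) if elements lying in a
common block `Γ_i = {k*i, …, k*i+k-1}` are mapped to elements lying in a common block:
`⌊r/k⌋ = ⌊s/k⌋` implies `⌊h r/k⌋ = ⌊h s/k⌋`. -/
def BlockPreserving (k : ℕ) (h : Equiv.Perm ℕ) : Prop :=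
  ∀ r s : ℕ, r / k = s / k → h r / k = h s / k

/-- Membership in `G_n`: permutations of `ℕ` fixing every `r ≥ k*n`. -/
def InG (k n : ℕ) (g : Equiv.Perm ℕ) : Prop :=
  ∀ r : ℕ, k * n ≤ r → g r = r

/-- Membership in `H_n = S_k ≀ S_n`: block-preserving elements of `G_n`. -/
def InH (k n : ℕ) (h : Equiv.Perm ℕ) : Prop :=
  InG k n h ∧ BlockPreserving k h

/-- The `i`-th block `Γ_i = {k*i, …, k*i+k-1}`. -/
def Block (k i : ℕ) : Set ℕ := {r | r / k = i}

/-- `g` is a minimal representative: (a) whenever `g` maps a block `Γ_i` onto a block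
`Γ_j` then `i = j`; (b) whenever `p (g s) = p s` then `g s = s`. -/
def MinimalRep (k : ℕ) (g : Equiv.Perm ℕ) : Prop :=
  (∀ i j : ℕ, ⇑g '' Block k i = Block k j → i = j) ∧
  (∀ s : ℕ, g s / k = s / k → g s = s)

/-- The `H`-support `[g]_H` of `g`: the union of those blocks `Γ_i` whose image
`g(Γ_i)` is not equal to any block `Γ_j`. -/
def HSupport (k : ℕ) (g : Equiv.Perm ℕ) : Set ℕ :=
  {r | ∀ j : ℕ, ⇑g '' Block k (r / k) ≠ Block k j}

theorem block_eq_Ico {k : ℕ} (hk : 0 < k) (i : ℕ) :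
    Block k i = Set.Ico (k * i) (k * i + k) := by
  ext r
  simp only [Block, Set.mem_ofPred_eq, Set.mem_Ico]
  rw [Nat.div_eq_iff hk, mul_comm i k]
  omega

/-- A block-preserving permutation maps each block onto a block: the image is contained in one,
and both have `k` elements. -/
theorem BlockPreserving.image_block {k : ℕ} (hk : 0 < k) {h : Equiv.Perm ℕ}
    (hh : BlockPreserving k h) (r : ℕ) :
    ⇑h '' Block k (r / k) = Block k (h r / k) := by
  have hcard : ∀ i, (Block k i).ncard = k := fun i => by
    simp [block_eq_Ico hk, ← Finset.coe_Ico, Set.ncard_coe_finset]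
  apply Set.eq_of_subset_of_ncard_le
  · rintro _ ⟨s, hs, rfl⟩
    exact hh s r hs
  · rw [Set.ncard_image_of_injective _ h.injective, hcard, hcard]
  · rw [block_eq_Ico hk]
    exact Set.finite_Ico _ _

theorem BlockPreserving.inv {k : ℕ} (hk : 0 < k) {h : Equiv.Perm ℕ}
    (hh : BlockPreserving k h) : BlockPreserving k h⁻¹ := by
  intro r s hrs
  have hs : s ∈ Block k (h (h⁻¹ r) / k) := by
    simpa [Block] using hrs.symm
  rw [← hh.image_block hk] at hs
  obtain ⟨t, ht, rfl⟩ := hs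
  simpa [Block] using ht.symm

/-- The complement of the `H`-support is stable under `h`. The hypothesis `ha` is condition (a) of
a minimal representative; it turns `g(Γ_m) = h(Γ_i)` into `g(h(Γ_i)) = h(Γ_i)`. -/
theorem notMem_HSupport_apply {k : ℕ} (hk : 0 < k) {g h : Equiv.Perm ℕ}
    (ha : ∀ i j : ℕ, ⇑g '' Block k i = Block k j → i = j)
    (hh : BlockPreserving k h) (hh' : BlockPreserving k (g⁻¹ * h * g))
    {r : ℕ} (hr : r ∉ HSupport k g) : h r ∉ HSupport k g := by
  simp only [HSupport, Set.mem_ofPred_eq, not_forall, not_not] at hr ⊢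
  obtain ⟨j, hj⟩ := hr
  obtain rfl := ha _ _ hj
  have key : ⇑g '' Block k ((g⁻¹ * h * g) r / k) = Block k (h r / k) := by
    rw [← hh'.image_block hk, ← hh.image_block hk, ← Set.image_comp]
    conv_rhs => rw [← hj, ← Set.image_comp]
    congr 1
    ext x
    simp
  have hm := ha _ _ key
  rw [hm] at key
  exact ⟨_, key⟩

/-- Fix `k ≥ 2`, `n ∈ ℕ` and let `g ∈ G_n` be a minimal representative
of its `H_n`-double coset. If `h ∈ H_n ∩ g·H_n·g⁻¹` (i.e. `h ∈ H_n` and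
`g⁻¹·h·g ∈ H_n`), then `h` maps `[g]_H` bijectively onto `[g]_H`. -/
theorem intersection_preserves_HSupport (k n : ℕ) (hk : 2 ≤ k)
    (g : Equiv.Perm ℕ) (hg : InG k n g) (hmin : MinimalRep k g)
    (h : Equiv.Perm ℕ) (hh : InH k n h) (hh' : InH k n (g⁻¹ * h * g)) :
    Set.BijOn (⇑h) (HSupport k g) (HSupport k g) := by
  have hk0 : 0 < k := by omega
  have hinv : BlockPreserving k (g⁻¹ * h⁻¹ * g) := by
    have := hh'.2.inv hk0
    simpa [mul_assoc] using this
  refine ⟨fun r hr => ?_, h.injective.injOn, fun r hr => ⟨h⁻¹ r, ?_, by simp⟩⟩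
  · by_contra hc
    have := notMem_HSupport_apply hk0 hmin.1 (hh.2.inv hk0) hinv hc
    exact this (by simpa using hr)
  · by_contra hc
    have := notMem_HSupport_apply hk0 hmin.1 hh.2 hh'.2 hc
    exact this (by simpa using hr)
end

section
/- Fix k ≥ 2 and m ∈ ℕ, and let g₁, g₂, g ∈ G_m. Then there exists a polynomial P with rational coefficients such that for every n ≥ m, the number of pairs (a,b) of permutations with a ∈ H_n·g₁·H_n, b ∈ H_n·g₂·H_n and a·b = g equals P(n)·n!·(k!)^n. (Equivalently: the structure coefficients c_{λ,μ}^{η}(n) of the Hecke algebras of the pairs (S_{kn}, S_k ≀ S_n) are polynomials in n.) -/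
/-!
Put `X_n = {a ∈ H_n g₁ H_n | a⁻¹ g ∈ H_n g₂ H_n}`; the pairs to be counted are the
`(a, a⁻¹ g)` with `a ∈ X_n`. Call `Γ_j` *broken* by `a` if it is not the image of a block
under `a`. The broken blocks of `a` are unchanged when `a` is multiplied on the right by an
element of `H_n`, and there are at most `m` of them when `a ∈ H_n g₁ H_n`
(`card_le_of_leftFactorsOn`). The elements of `X_n` are sorted by the set `S ⊆ {m, …, n-1}` of
indices at least `m` of their broken blocks.

* The size of the part belonging to `S` depends only on `j = |S|`: left multiplication by a
  permutation of the blocks of index at least `m`, which commutes with `g ∈ G_m`, exchanges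
  the parts (`ncard_leftFactorsOn_le`). So `|X_n| = ∑ j ≤ m, (n - m).choose j * F(n, j)`,
  where `F(n, j)` is the size of the part `Y_n` belonging to `S = {m, …, m+j-1}`.
* For `n ≥ m + j`, `F(n, j)` is a constant `c_j` times `|H_n|`. Indeed `Y_{n+1} = Y_n H_{n+1}`:
  since `Γ_n` is not broken by `a ∈ Y_{n+1}`, some `s ∈ H_{n+1}` makes `a s` fix `Γ_n`
  pointwise (`exists_straighten`). The double coset conditions then descend from level `n + 1`
  to level `n` by `doubleCoset_descend`: if `x = h y h'` with `x, y ∈ G_n` and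
  `h, h' ∈ H_{n+1}`, then `h'` can be straightened to fix `Γ_n` by a block exchange `s`, at the
  cost of multiplying `h` by `y s y⁻¹`, which is again a block exchange. Finally
  `Y_n × H_{n+1} → Y_{n+1}` has fibres of size `|G_n ∩ H_{n+1}| = |H_n|` (`ncard_mul_card`).

Hence `|X_n| = (∑ j ≤ m, c_j (n - m).choose j) |H_n|` with `|H_n| = n! (k!)^n`
(`card_groupH`), and the sum is a polynomial in `n`.
-/

/-! ### The groups `G_n` and `H_n` -/

/-- `a` maps the block `Γ_i` exactly onto the block `Γ_j`. -/
def MapsBlock (k : ℕ) (a : Equiv.Perm ℕ) (i j : ℕ) : Prop :=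
  ∀ r : ℕ, r / k = i ↔ a r / k = j

/-- The indices `j` such that `Γ_j` is not the image of a block under `a`. -/
def brokenBlocks (k : ℕ) (a : Equiv.Perm ℕ) : Set ℕ :=
  {j | ∀ i : ℕ, ¬ MapsBlock k a i j}

/-- The group `G_n`. -/
def groupG (k n : ℕ) : Subgroup (Equiv.Perm ℕ) where
  carrier := {g | InG k n g}
  one_mem' := fun _ _ => rfl
  mul_mem' := by
    intro a b ha hb r hr
    rw [Equiv.Perm.mul_apply, hb r hr, ha r hr]
  inv_mem' := by
    intro a ha r hr
    rw [Equiv.Perm.inv_eq_iff_eq, ha r hr]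

/-- The group `H_n`. Block preservation is encoded as an equivalence, which makes closure
under inverses immediate; `mem_groupH` shows that this is the same condition. -/
def groupH (k n : ℕ) : Subgroup (Equiv.Perm ℕ) where
  carrier := {h | InG k n h ∧ ∀ r s : ℕ, r / k = s / k ↔ h r / k = h s / k}
  one_mem' := ⟨fun _ _ => rfl, fun _ _ => Iff.rfl⟩
  mul_mem' := by
    rintro a b ⟨ha, ha'⟩ ⟨hb, hb'⟩
    exact ⟨(groupG k n).mul_mem ha hb, fun r s => (hb' r s).trans (ha' _ _)⟩
  inv_mem' := by
    rintro a ⟨ha, ha'⟩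
    refine ⟨(groupG k n).inv_mem ha, fun r s => ?_⟩
    rw [ha' (a⁻¹ r) (a⁻¹ s)]
    simp

/-- Blocks are finite of equal size `k`, so a permutation mapping blocks into blocks maps
them onto blocks. -/
theorem BlockPreserving.iff {k : ℕ} (hk : 0 < k) {h : Equiv.Perm ℕ}
    (hh : BlockPreserving k h) (r s : ℕ) : r / k = s / k ↔ h r / k = h s / k := by
  refine ⟨hh r s, fun hrs => ?_⟩
  have key : ∀ i x : ℕ, x ∈ Finset.Ico (k * i) (k * i + k) ↔ x / k = i := by
    intro i x
    rw [Finset.mem_Ico, Nat.div_eq_iff hk]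
    have := Nat.mul_comm i k
    omega
  have hsub : (Finset.Ico (k * (r / k)) (k * (r / k) + k)).map h.toEmbedding ⊆
      Finset.Ico (k * (h r / k)) (k * (h r / k) + k) := by
    intro x hx
    obtain ⟨y, hy, rfl⟩ := Finset.mem_map.1 hx
    rw [key] at hy
    exact (key _ _).2 (hh y r hy)
  have heq := Finset.eq_of_subset_of_card_le hsub (by simp)
  have hs : h s ∈ Finset.Ico (k * (h r / k)) (k * (h r / k) + k) := (key _ _).2 hrs.symm
  rw [← heq] at hs
  obtain ⟨y, hy, hys⟩ := Finset.mem_map.1 hs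
  have : y = s := h.injective hys
  subst this
  exact ((key _ _).1 hy).symm

theorem mem_groupH {k : ℕ} (hk : 0 < k) (n : ℕ) (h : Equiv.Perm ℕ) :
    h ∈ groupH k n ↔ InH k n h :=
  ⟨fun hh => ⟨hh.1, fun r s => (hh.2 r s).1⟩, fun hh => ⟨hh.1, hh.2.iff hk⟩⟩

theorem groupH_le_groupG (k n : ℕ) : groupH k n ≤ groupG k n := fun _ h => h.1

theorem groupG_mono (k : ℕ) {n n' : ℕ} (h : n ≤ n') : groupG k n ≤ groupG k n' :=
  fun _ hg r hr => hg r ((Nat.mul_le_mul_left k h).trans hr)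

theorem groupH_mono (k : ℕ) {n n' : ℕ} (h : n ≤ n') : groupH k n ≤ groupH k n' :=
  fun _ hg => ⟨groupG_mono k h hg.1, hg.2⟩

theorem mul_le_iff_le_div {k : ℕ} (hk : 0 < k) (n r : ℕ) : k * n ≤ r ↔ n ≤ r / k := by
  rw [Nat.le_div_iff_mul_le hk, Nat.mul_comm]

/-! ### Images of blocks -/

theorem MapsBlock.mul {k : ℕ} {a b : Equiv.Perm ℕ} {i j l : ℕ} (ha : MapsBlock k a j l)
    (hb : MapsBlock k b i j) : MapsBlock k (a * b) i l :=
  fun r => (hb r).trans (ha (b r))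

theorem MapsBlock.inv {k : ℕ} {a : Equiv.Perm ℕ} {i j : ℕ} (ha : MapsBlock k a i j) :
    MapsBlock k a⁻¹ j i := by
  intro r
  rw [ha (a⁻¹ r)]
  simp

theorem MapsBlock.left_unique {k : ℕ} (hk : 0 < k) {a : Equiv.Perm ℕ} {i i' j : ℕ}
    (h : MapsBlock k a i j) (h' : MapsBlock k a i' j) : i = i' := by
  have h1 := (h' (k * i)).2 ((h (k * i)).1 (Nat.mul_div_cancel_left i hk))
  rwa [Nat.mul_div_cancel_left i hk] at h1

theorem mapsBlock_of_mem_groupG {k : ℕ} (hk : 0 < k) {n : ℕ} {a : Equiv.Perm ℕ}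
    (ha : a ∈ groupG k n) {i : ℕ} (hi : n ≤ i) : MapsBlock k a i i := by
  have fwd : ∀ b ∈ groupG k n, ∀ r, r / k = i → b r / k = i := by
    intro b hb r hr
    rw [hb r ((mul_le_iff_le_div hk n r).2 (hr ▸ hi)), hr]
  intro r
  refine ⟨fwd a ha r, fun h => ?_⟩
  simpa using fwd a⁻¹ ((groupG k n).inv_mem ha) _ h

/-- The image of a block under an element of `H_n` is the block containing the image of its
first element. -/
theorem mapsBlock_of_mem_groupH {k : ℕ} (hk : 0 < k) {n : ℕ} {h : Equiv.Perm ℕ}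
    (hh : h ∈ groupH k n) (i : ℕ) : MapsBlock k h i (h (k * i) / k) := by
  intro r
  rw [← hh.2 r (k * i), Nat.mul_div_cancel_left i hk]

theorem mapsBlock_lt_of_mem_groupG {k : ℕ} (hk : 0 < k) {n : ℕ} {a : Equiv.Perm ℕ}
    (ha : a ∈ groupG k n) {i j : ℕ} (hij : MapsBlock k a i j) (hj : j < n) : i < n := by
  by_contra hi
  have h1 := (mapsBlock_of_mem_groupG hk ha (not_lt.1 hi)) (k * i)
  have h2 := hij (k * i)
  have h3 := Nat.mul_div_cancel_left i hk
  omega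

theorem mem_groupH_of_div {k n : ℕ} {h : Equiv.Perm ℕ} (hG : h ∈ groupG k n)
    (σ : Equiv.Perm ℕ) (hσ : ∀ r, h r / k = σ (r / k)) : h ∈ groupH k n :=
  ⟨hG, fun r s => by rw [hσ, hσ, σ.injective.eq_iff]⟩

theorem mem_groupG_of_succ {k : ℕ} (hk : 0 < k) {n : ℕ} {a : Equiv.Perm ℕ}
    (ha : a ∈ groupG k (n + 1)) (hfix : ∀ r, r / k = n → a r = r) : a ∈ groupG k n := by
  intro r hr
  rw [mul_le_iff_le_div hk] at hr
  rcases hr.eq_or_lt with h | h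
  · exact hfix r h.symm
  · exact ha r ((mul_le_iff_le_div hk _ _).2 h)

/-- If `x` maps `Γ_i` onto `Γ_n`, then `x` becomes the identity on `Γ_n` after composition
with a permutation `s` that exchanges the blocks `Γ_i` and `Γ_n` and fixes everything else. -/
theorem exists_straighten {k : ℕ} {x : Equiv.Perm ℕ} {i n : ℕ} (hx : MapsBlock k x i n) :
    ∃ s : Equiv.Perm ℕ, (∀ r, s r / k = Equiv.swap i n (r / k)) ∧
      (∀ r, r / k ≠ i → r / k ≠ n → s r = r) ∧ ∀ r, r / k = n → x (s r) = r := by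
  have h1 : ∀ r, r / k = i → x r / k = n := fun r => (hx r).1
  have h2 : ∀ r, r / k = n → x.symm r / k = i := fun r => (hx.inv r).1
  -- When `i = n` the first branch of each function is the one that applies, and they are
  -- still inverse to each other.
  let s : Equiv.Perm ℕ :=
    { toFun := fun r => if r / k = n then x.symm r else if r / k = i then x r else r
      invFun := fun r => if r / k = i then x r else if r / k = n then x.symm r else r
      left_inv := by
        intro r
        by_cases hn : r / k = n
        · simp [hn, h2 r hn]
        · by_cases hi : r / k = i
          · have hni : n ≠ i := fun h => hn (hi.trans h.symm)
            simp [hi, h1 r hi, hni, hni.symm]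
          · simp [hn, hi]
      right_inv := by
        intro r
        by_cases hi : r / k = i
        · simp [hi, h1 r hi]
        · by_cases hn : r / k = n
          · have hni : n ≠ i := fun h => hi (hn.trans h)
            simp [hn, h2 r hn, hni, hni.symm]
          · simp [hn, hi] }
  have hs : ∀ r, s r = if r / k = n then x.symm r else if r / k = i then x r else r :=
    fun _ => rfl
  refine ⟨s, fun r => ?_, fun r hi hn => ?_, fun r hn => ?_⟩
  · rw [hs]
    split_ifs with hn hi
    · rw [hn, Equiv.swap_apply_right, h2 r hn]
    · rw [hi, Equiv.swap_apply_left, h1 r hi]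
    · rw [Equiv.swap_apply_of_ne_of_ne hi hn]
  · rw [hs, if_neg hn, if_neg hi]
  · rw [hs, if_pos hn, Equiv.apply_symm_apply]

theorem straighten_mem {k : ℕ} (hk : 0 < k) {s : Equiv.Perm ℕ} {i n : ℕ} (hi : i < n + 1)
    (h1 : ∀ r, s r / k = Equiv.swap i n (r / k))
    (h2 : ∀ r, r / k ≠ i → r / k ≠ n → s r = r) : s ∈ groupH k (n + 1) := by
  refine mem_groupH_of_div (fun r hr => ?_) _ h1
  rw [mul_le_iff_le_div hk] at hr
  exact h2 r (by omega) (by omega)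

/-! ### Stability of double cosets -/

/-- Two elements of `G_n` in the same `H_{n+1}`-double coset are in the same
`H_n`-double coset. -/
theorem doubleCoset_descend {k : ℕ} (hk : 0 < k) {n : ℕ} {x y : Equiv.Perm ℕ}
    (hx : x ∈ groupG k n) (hy : y ∈ groupG k n)
    (hxy : ∃ h ∈ groupH k (n + 1), ∃ h' ∈ groupH k (n + 1), x = h * y * h') :
    ∃ h ∈ groupH k n, ∃ h' ∈ groupH k n, x = h * y * h' := by
  obtain ⟨h, hh, h', hh', hxe⟩ := hxy
  obtain ⟨a, ha⟩ : ∃ a, MapsBlock k h' n a := ⟨_, mapsBlock_of_mem_groupH hk hh' n⟩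
  have han : a < n + 1 :=
    mapsBlock_lt_of_mem_groupG hk ((groupG k (n + 1)).inv_mem hh'.1) ha.inv (Nat.lt_succ_self n)
  obtain ⟨s, hs1, hs2, hs3⟩ := exists_straighten ha.inv
  have hsH := straighten_mem hk han hs1 hs2
  -- `c` is the inverse of the right factor, corrected to fix `Γ_n` pointwise.
  have hcH : h'⁻¹ * s ∈ groupH k (n + 1) :=
    (groupH k (n + 1)).mul_mem ((groupH k (n + 1)).inv_mem hh') hsH
  have hc : h'⁻¹ * s ∈ groupH k n := ⟨mem_groupG_of_succ hk hcH.1 hs3, hcH.2⟩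
  -- The left factor is corrected by `y * s * y⁻¹`, which exchanges the blocks `Γ_b`, `Γ_n`.
  have hyn : MapsBlock k y n n := mapsBlock_of_mem_groupG hk hy le_rfl
  obtain ⟨b, hb⟩ : ∃ b, MapsBlock k y a b := by
    have hye : y = h⁻¹ * (x * h'⁻¹) := by rw [hxe]; group
    rw [hye]
    exact ⟨_, (mapsBlock_of_mem_groupH hk ((groupH k (n + 1)).inv_mem hh) n).mul
      ((mapsBlock_of_mem_groupG hk hx le_rfl).mul ha.inv)⟩
  have hu : ∀ r, (y * s * y⁻¹) r / k = Equiv.swap b n (r / k) := by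
    intro r
    simp only [Equiv.Perm.mul_apply]
    by_cases hrb : r / k = b
    · rw [hrb, Equiv.swap_apply_left, ← hyn, hs1, (hb.inv r).1 hrb, Equiv.swap_apply_left]
    · by_cases hrn : r / k = n
      · rw [hrn, Equiv.swap_apply_right, ← hb, hs1, (hyn.inv r).1 hrn, Equiv.swap_apply_right]
      · rw [Equiv.swap_apply_of_ne_of_ne hrb hrn, hs2 _ (fun h => hrb ((hb.inv r).2 h))
          (fun h => hrn ((hyn.inv r).2 h)), ← Equiv.Perm.mul_apply, mul_inv_cancel, Equiv.Perm.one_apply]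
  have hyG := groupG_mono k (Nat.le_succ n) hy
  have huH : y * s * y⁻¹ ∈ groupH k (n + 1) :=
    mem_groupH_of_div ((groupG k (n + 1)).mul_mem ((groupG k (n + 1)).mul_mem hyG hsH.1)
      ((groupG k (n + 1)).inv_mem hyG)) _ hu
  have hl : h * (y * s * y⁻¹) ∈ groupH k n := by
    refine ⟨?_, ((groupH k (n + 1)).mul_mem hh huH).2⟩
    have : h * (y * s * y⁻¹) = x * (h'⁻¹ * s) * y⁻¹ := by rw [hxe]; group
    rw [this]
    exact (groupG k n).mul_mem ((groupG k n).mul_mem hx hc.1) ((groupG k n).inv_mem hy)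
  exact ⟨_, hl, _, (groupH k n).inv_mem hc, by rw [hxe]; group⟩

/-! ### The order of `H_n` -/

/-- The block-preserving permutation moving blocks by `σ` and acting inside the block
`Γ_q` by `f q`. -/
def blockPerm (k : ℕ) [NeZero k] (σ : Equiv.Perm ℕ) (f : ℕ → Equiv.Perm (Fin k)) :
    Equiv.Perm ℕ :=
  (Nat.divModEquiv k).trans ((Equiv.prodShear σ f).trans (Nat.divModEquiv k).symm)

theorem blockPerm_apply (k : ℕ) [NeZero k] (σ : Equiv.Perm ℕ) (f : ℕ → Equiv.Perm (Fin k))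
    (r : ℕ) : blockPerm k σ f r = σ (r / k) * k + f (r / k) (Fin.ofNat k r) := rfl

theorem blockPerm_div (k : ℕ) [NeZero k] (σ : Equiv.Perm ℕ) (f : ℕ → Equiv.Perm (Fin k))
    (r : ℕ) : blockPerm k σ f r / k = σ (r / k) := by
  rw [blockPerm_apply, Nat.add_comm, Nat.add_mul_div_right _ _ (NeZero.pos k),
    Nat.div_eq_of_lt (Fin.isLt _), Nat.zero_add]

theorem blockPerm_mem (k : ℕ) [NeZero k] (n : ℕ) (σ : Equiv.Perm ℕ)
    (f : ℕ → Equiv.Perm (Fin k)) (hσ : ∀ q, n ≤ q → σ q = q) (hf : ∀ q, n ≤ q → f q = 1) :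
    blockPerm k σ f ∈ groupH k n := by
  refine mem_groupH_of_div (fun r hr => ?_) σ (blockPerm_div k σ f)
  rw [mul_le_iff_le_div (NeZero.pos k)] at hr
  rw [blockPerm_apply, hσ _ hr, hf _ hr]
  simp [Nat.div_add_mod']

theorem card_groupH {k : ℕ} (hk : 0 < k) (n : ℕ) :
    Nat.card (groupH k n) = n.factorial * k.factorial ^ n := by
  have : NeZero k := ⟨hk.ne'⟩
  let F : Equiv.Perm {q // q < n} × ({q // q < n} → Equiv.Perm (Fin k)) → groupH k n :=
    fun p => ⟨blockPerm k (Equiv.Perm.ofSubtype p.1)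
      (fun q => if h : q < n then p.2 ⟨q, h⟩ else 1),
      blockPerm_mem k n _ _
        (fun q hq => Equiv.Perm.ofSubtype_apply_of_not_mem _ (not_lt.2 hq))
        (fun q hq => dif_neg (not_lt.2 hq))⟩
  have hF : ∀ p (q : {q // q < n}) (i : Fin k),
      ((F p : groupH k n) : Equiv.Perm ℕ) (q * k + i) = p.1 q * k + p.2 q i := by
    intro p q i
    have hdiv : ((q : ℕ) * k + i) / k = q := by
      rw [Nat.add_comm, Nat.add_mul_div_right _ _ hk, Nat.div_eq_of_lt i.isLt, Nat.zero_add]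
    have hmod : Fin.ofNat k ((q : ℕ) * k + i) = i := by
      ext
      simp [Fin.ofNat, Nat.mod_eq_of_lt i.isLt]
    change blockPerm k _ _ _ = _
    rw [blockPerm_apply, hdiv, hmod, Equiv.Perm.ofSubtype_apply_coe, dif_pos q.2]
  have hdm : ∀ (q q' : ℕ) (i i' : Fin k), q * k + i = q' * k + i' → q = q' ∧ i = i' := by
    intro q q' i i' h
    have h2 := (Nat.divModEquiv k).symm.injective (a₁ := (q, i)) (a₂ := (q', i')) h
    simpa using h2
  have hbij : Function.Bijective F := by
    constructor
    · intro p p' hpp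
      have h : ∀ (q : {q // q < n}) (i : Fin k), p.1 q = p'.1 q ∧ p.2 q i = p'.2 q i := by
        intro q i
        have := hdm _ _ _ _ ((hF p q i).symm.trans ((congrArg (fun h : groupH k n =>
          (h : Equiv.Perm ℕ) (q * k + i)) hpp).trans (hF p' q i)))
        exact ⟨Subtype.ext this.1, this.2⟩
      refine Prod.ext (Equiv.ext fun q => (h q ⟨0, hk⟩).1) (funext fun q => Equiv.ext fun i => ?_)
      exact (h q i).2
    · rintro ⟨h, hh⟩
      have hlt : ∀ r : ℕ, r / k < n → h r / k < n := by
        intro r hr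
        exact mapsBlock_lt_of_mem_groupG hk ((groupG k n).inv_mem hh.1)
          (fun s => by
            have := ((mapsBlock_of_mem_groupH hk hh (r / k)).inv s)
            rwa [(mapsBlock_of_mem_groupH hk hh (r / k) r).1 rfl |>.symm] at this) hr
      have hdiv : ∀ (q : ℕ) (i : Fin k), (q * k + i) / k = q := by
        intro q i
        rw [Nat.add_comm, Nat.add_mul_div_right _ _ hk, Nat.div_eq_of_lt i.isLt, Nat.zero_add]
      let i0 : Fin k := ⟨0, hk⟩
      let σ : {q // q < n} → {q // q < n} :=
        fun q => ⟨h (q * k + i0) / k, hlt _ (by rw [hdiv]; exact q.2)⟩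
      have hσ : Function.Injective σ := by
        intro q q' hqq
        have := (hh.2 _ _).2 (congrArg Subtype.val hqq)
        rw [hdiv, hdiv] at this
        exact Subtype.ext this
      let f : {q // q < n} → Fin k → Fin k :=
        fun q i => ⟨h ((q : ℕ) * k + (i : ℕ)) % k, Nat.mod_lt _ hk⟩
      have hdivσ : ∀ (q : {q // q < n}) (i : Fin k), h (q * k + i) / k = σ q := fun q i =>
        (hh.2 _ _).1 ((hdiv q i).trans (hdiv q i0).symm)
      have hf : ∀ q, Function.Injective (f q) := by
        intro q i i' hii
        have hmod : h (q * k + i) % k = h (q * k + i') % k := congrArg Fin.val hii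
        have : h (q * k + i) = h (q * k + i') := by
          rw [← Nat.div_add_mod' (h (q * k + i)) k, ← Nat.div_add_mod' (h (q * k + i')) k,
            hmod, hdivσ, hdivσ]
        have := h.injective this
        exact Fin.ext (Nat.add_left_cancel this)
      refine ⟨(Equiv.ofBijective σ (Finite.injective_iff_bijective.1 hσ),
        fun q => Equiv.ofBijective (f q) (Finite.injective_iff_bijective.1 (hf q))), ?_⟩
      refine Subtype.ext (Equiv.ext fun r => ?_)
      by_cases hr : r / k < n
      · have hr' : r = (r / k) * k + (⟨r % k, Nat.mod_lt _ hk⟩ : Fin k) :=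
          (Nat.div_add_mod' r k).symm
        have h1 := hF (Equiv.ofBijective σ (Finite.injective_iff_bijective.1 hσ),
          fun q => Equiv.ofBijective (f q) (Finite.injective_iff_bijective.1 (hf q)))
          ⟨r / k, hr⟩ ⟨r % k, Nat.mod_lt _ hk⟩
        rw [← hr'] at h1
        refine h1.trans ?_
        change (σ ⟨r / k, hr⟩ : ℕ) * k + h (r / k * k + r % k) % k = h r
        rw [← hdivσ ⟨r / k, hr⟩ ⟨r % k, Nat.mod_lt _ hk⟩]
        change h (r / k * k + r % k) / k * k + h (r / k * k + r % k) % k = h r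
        rw [Nat.div_add_mod', Nat.div_add_mod']
      · have hr' := (mul_le_iff_le_div hk n r).2 (not_lt.1 hr)
        exact ((F _).2.1 r hr').trans (hh.1 r hr').symm
  have hn : Nat.card {q // q < n} = n := by
    rw [← Nat.card_congr Fin.equivSubtype, Nat.card_fin]
  rw [← Nat.card_eq_of_bijective F hbij, Nat.card_prod, Nat.card_fun, Nat.card_perm,
    Nat.card_perm, hn, Nat.card_fin]

/-! ### Counting left factors -/

/-- The permutations `a` in the double coset of `g₁` such that `a⁻¹ * g` is in the double
coset of `g₂`: the left factors of the factorizations of `g` to be counted. -/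
def leftFactors (k n : ℕ) (g₁ g₂ g : Equiv.Perm ℕ) : Set (Equiv.Perm ℕ) :=
  {a | (∃ h ∈ groupH k n, ∃ h' ∈ groupH k n, a = h * g₁ * h') ∧
    ∃ h ∈ groupH k n, ∃ l ∈ groupH k n, a⁻¹ * g = h * g₂ * l}

/-- The left factors whose broken blocks of index at least `m` are those indexed by `S`. -/
def leftFactorsOn (k m n : ℕ) (g₁ g₂ g : Equiv.Perm ℕ) (S : Finset ℕ) :
    Set (Equiv.Perm ℕ) :=
  {a | a ∈ leftFactors k n g₁ g₂ g ∧ ∀ j, m ≤ j → (j ∈ brokenBlocks k a ↔ j ∈ S)}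

theorem finite_groupG {k : ℕ} (n : ℕ) : (groupG k n : Set (Equiv.Perm ℕ)).Finite := by
  have h : Finite {f : Equiv.Perm ℕ // ∀ a, ¬ a < k * n → f a = a} :=
    Finite.of_equiv _ (Equiv.Perm.subtypeEquivSubtypePerm (fun r => r < k * n))
  exact (Set.finite_coe_iff.1 h).subset fun f hf a ha => hf a (not_lt.1 ha)

theorem leftFactors_subset {k n : ℕ} {g₁ g₂ g : Equiv.Perm ℕ} (hg₁ : g₁ ∈ groupG k n) :
    leftFactors k n g₁ g₂ g ⊆ groupG k n := by
  rintro a ⟨⟨h, hh, h', hh', rfl⟩, -⟩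
  exact (groupG k n).mul_mem ((groupG k n).mul_mem hh.1 hg₁) hh'.1

theorem leftFactors_mul {k n : ℕ} {g₁ g₂ g a x : Equiv.Perm ℕ}
    (ha : a ∈ leftFactors k n g₁ g₂ g) (hx : x ∈ groupH k n) :
    a * x ∈ leftFactors k n g₁ g₂ g := by
  obtain ⟨⟨h, hh, h', hh', e⟩, l, hl, l', hl', e'⟩ := ha
  refine ⟨⟨h, hh, h' * x, (groupH k n).mul_mem hh' hx, by rw [e]; group⟩,
    x⁻¹ * l, (groupH k n).mul_mem ((groupH k n).inv_mem hx) hl, l', hl', ?_⟩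
  rw [mul_inv_rev, mul_assoc, e']
  group

theorem leftFactors_mono {k n n' : ℕ} (hn : n ≤ n') (g₁ g₂ g : Equiv.Perm ℕ) :
    leftFactors k n g₁ g₂ g ⊆ leftFactors k n' g₁ g₂ g := by
  rintro a ⟨⟨h, hh, h', hh', e⟩, l, hl, l', hl', e'⟩
  exact ⟨⟨h, groupH_mono k hn hh, h', groupH_mono k hn hh', e⟩,
    l, groupH_mono k hn hl, l', groupH_mono k hn hl', e'⟩

theorem leftFactors_descend {k : ℕ} (hk : 0 < k) {n : ℕ} {g₁ g₂ g a : Equiv.Perm ℕ}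
    (hg₁ : g₁ ∈ groupG k n) (hg₂ : g₂ ∈ groupG k n) (hg : g ∈ groupG k n)
    (haG : a ∈ groupG k n) (ha : a ∈ leftFactors k (n + 1) g₁ g₂ g) :
    a ∈ leftFactors k n g₁ g₂ g :=
  ⟨doubleCoset_descend hk haG hg₁ ha.1,
    doubleCoset_descend hk ((groupG k n).mul_mem ((groupG k n).inv_mem haG) hg) hg₂ ha.2⟩

theorem brokenBlocks_mul {k : ℕ} (hk : 0 < k) {n : ℕ} (a : Equiv.Perm ℕ) {h : Equiv.Perm ℕ}
    (hh : h ∈ groupH k n) : brokenBlocks k (a * h) = brokenBlocks k a := by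
  have key : ∀ b : Equiv.Perm ℕ, ∀ l ∈ groupH k n,
      brokenBlocks k (b * l) ⊆ brokenBlocks k b := by
    intro b l hl j hj i hi
    have h2 := mapsBlock_of_mem_groupH hk ((groupH k n).inv_mem hl) i
    exact hj _ (hi.mul (by simpa using h2.inv))
  refine (key a h hh).antisymm ?_
  simpa using key (a * h) h⁻¹ ((groupH k n).inv_mem hh)

theorem brokenBlocks_lt {k : ℕ} (hk : 0 < k) {n : ℕ} {a : Equiv.Perm ℕ}
    (ha : a ∈ groupG k n) {j : ℕ} (hj : j ∈ brokenBlocks k a) : j < n := by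
  by_contra h
  exact hj j (mapsBlock_of_mem_groupG hk ha (not_lt.1 h))

theorem leftFactorsOn_mul {k : ℕ} (hk : 0 < k) {m n : ℕ} {g₁ g₂ g a x : Equiv.Perm ℕ}
    {S : Finset ℕ} (ha : a ∈ leftFactorsOn k m n g₁ g₂ g S) (hx : x ∈ groupH k n) :
    a * x ∈ leftFactorsOn k m n g₁ g₂ g S := by
  refine ⟨leftFactors_mul ha.1 hx, ?_⟩
  rw [brokenBlocks_mul hk a hx]
  exact ha.2

/-- An element of the double coset of `g₁ ∈ G_m` has at most `m` broken blocks. -/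
theorem card_le_of_leftFactorsOn {k : ℕ} (hk : 0 < k) {m n : ℕ} {g₁ g₂ g a : Equiv.Perm ℕ}
    (hg₁ : g₁ ∈ groupG k m) {S : Finset ℕ} (hS : ∀ j ∈ S, m ≤ j)
    (ha : a ∈ leftFactorsOn k m n g₁ g₂ g S) : S.card ≤ m := by
  obtain ⟨⟨⟨h, hh, h', hh', rfl⟩, -⟩, hb⟩ := ha
  rw [brokenBlocks_mul hk _ hh'] at hb
  have hsub : S ⊆ (Finset.range m).image (fun q => h (k * q) / k) := by
    intro j hj
    have hjb := (hb j (hS j hj)).2 hj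
    have hj' := mapsBlock_of_mem_groupH hk ((groupH k n).inv_mem hh) j
    have hi := (hj'.inv (k * (h⁻¹ (k * j) / k))).1 (Nat.mul_div_cancel_left _ hk)
    rw [inv_inv] at hi
    refine Finset.mem_image.2 ⟨_, Finset.mem_range.2 (brokenBlocks_lt hk hg₁ ?_), hi⟩
    intro i hgi
    exact hjb i (MapsBlock.mul (by simpa using hj'.inv) hgi)
  exact (Finset.card_le_card hsub).trans (Finset.card_image_le.trans (Finset.card_range m).le)

theorem exists_perm_mem_iff {A S T : Finset ℕ} (hS : S ⊆ A) (hT : T ⊆ A)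
    (hc : S.card = T.card) :
    ∃ σ : Equiv.Perm ℕ, (∀ q, q ∉ A → σ q = q) ∧ ∀ q, σ q ∈ T ↔ q ∈ S := by
  classical
  let e : {x : {q // q ∈ A} // x.1 ∈ S} ≃ {x : {q // q ∈ A} // x.1 ∈ T} :=
    (Equiv.subtypeSubtypeEquivSubtype (p := (· ∈ A)) (q := (· ∈ S)) (fun h => hS h)).trans
      ((Finset.equivOfCardEq hc).trans
        (Equiv.subtypeSubtypeEquivSubtype (p := (· ∈ A)) (q := (· ∈ T)) (fun h => hT h)).symm)
  refine ⟨Equiv.Perm.ofSubtype e.extendSubtype,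
    fun q hq => Equiv.Perm.ofSubtype_apply_of_not_mem _ hq, fun q => ?_⟩
  by_cases hq : q ∈ A
  · have h1 : Equiv.Perm.ofSubtype e.extendSubtype q = (e.extendSubtype ⟨q, hq⟩ : ℕ) :=
      Equiv.Perm.ofSubtype_apply_of_mem _ hq
    rw [h1]
    by_cases hqS : q ∈ S
    · exact iff_of_true (e.extendSubtype_mem ⟨q, hq⟩ hqS) hqS
    · exact iff_of_false (e.extendSubtype_not_mem ⟨q, hq⟩ hqS) hqS
  · rw [Equiv.Perm.ofSubtype_apply_of_not_mem _ hq]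
    exact iff_of_false (fun h => hq (hT h)) (fun h => hq (hS h))

/-- Left multiplication by a permutation of the blocks `Γ_m, …, Γ_{n-1}`, which commutes with
`g`, transports left factors. -/
theorem ncard_leftFactorsOn_le {k : ℕ} (hk : 0 < k) {m n : ℕ} (hmn : m ≤ n)
    {g₁ g₂ g : Equiv.Perm ℕ} (hg₁ : g₁ ∈ groupG k m) (hg : g ∈ groupG k m) {S T : Finset ℕ}
    (hS : S ⊆ Finset.Ico m n) (hT : T ⊆ Finset.Ico m n) (hc : S.card = T.card) :
    (leftFactorsOn k m n g₁ g₂ g S).ncard ≤ (leftFactorsOn k m n g₁ g₂ g T).ncard := by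
  have : NeZero k := ⟨hk.ne'⟩
  obtain ⟨σ, hσ, hST⟩ := exists_perm_mem_iff hS hT hc
  have hκ : blockPerm k σ 1 ∈ groupH k n :=
    blockPerm_mem k n _ _ (fun q hq => hσ q (by simp [hq])) (fun _ _ => rfl)
  have hκdiv := blockPerm_div k σ 1
  have hκfix : ∀ r, r / k < m → blockPerm k σ 1 r = r := by
    intro r hr
    rw [blockPerm_apply, hσ _ (by simp [hr])]
    simp [Nat.div_add_mod']
  generalize blockPerm k σ 1 = κ at hκ hκdiv hκfix
  have hcomm : Commute κ g := by
    refine Equiv.Perm.Disjoint.commute fun r => ?_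
    rcases lt_or_ge (r / k) m with hr | hr
    · exact Or.inl (hκfix r hr)
    · exact Or.inr (hg r ((mul_le_iff_le_div hk m r).2 hr))
  refine Set.ncard_le_ncard_of_injOn (fun a => κ * a) ?_ (mul_right_injective κ).injOn
    ((finite_groupG n).subset fun a ha =>
      leftFactors_subset (groupG_mono k hmn hg₁) ha.1)
  rintro a ⟨⟨⟨h, hh, h', hh', e⟩, l, hl, l', hl', e'⟩, hb⟩
  refine ⟨⟨⟨κ * h, (groupH k n).mul_mem hκ hh, h', hh', by rw [e]; group⟩,
    l, hl, l' * κ⁻¹, (groupH k n).mul_mem hl' ((groupH k n).inv_mem hκ), ?_⟩, ?_⟩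
  · rw [mul_inv_rev, mul_assoc, (hcomm.inv_left).eq, ← mul_assoc, e']
    group
  · have hκM : ∀ q, MapsBlock k κ q (σ q) := by
      intro q r
      rw [hκdiv, σ.injective.eq_iff]
    intro j hj
    obtain ⟨q, rfl⟩ := σ.surjective j
    have hq : m ≤ q := by
      by_contra h
      rw [hσ q (by simp; omega)] at hj
      exact h hj
    rw [hST, ← hb q hq]
    refine ⟨fun H i hi => H i ((hκM q).mul hi), fun H i hi => H i ?_⟩
    simpa using (hκM q).inv.mul hi

/-- The map `(y, l) ↦ y * l` from `Y × L` to `Y * L` has fibres of size `|K|`. -/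
theorem ncard_mul_card {Γ : Type*} [Group Γ] (K L : Subgroup Γ) (hKL : K ≤ L) (Y Z : Set Γ)
    (hYK : ∀ y ∈ Y, ∀ x ∈ K, y * x ∈ Y) (hYL : ∀ y ∈ Y, ∀ l ∈ L, y * l ∈ Z)
    (hZ : ∀ z ∈ Z, ∃ l ∈ L, z * l ∈ Y) (hYY : ∀ y ∈ Y, ∀ l ∈ L, y * l ∈ Y → l ∈ K) :
    Y.ncard * Nat.card L = Z.ncard * Nat.card K := by
  choose! c hcL hcY using hZ
  let F : Z × K → Y × L := fun p =>
    (⟨p.1 * c p.1 * p.2, hYK _ (hcY _ p.1.2) _ p.2.2⟩,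
      ⟨(p.2 : Γ)⁻¹ * (c p.1)⁻¹, L.mul_mem (L.inv_mem (hKL p.2.2)) (L.inv_mem (hcL _ p.1.2))⟩)
  have hF : Function.Bijective F := by
    constructor
    · rintro ⟨⟨z, hz⟩, x, hx⟩ ⟨⟨z', hz'⟩, x', hx'⟩ h
      have h1 : z * c z * x = z' * c z' * x' := congrArg (fun p => (p.1 : Γ)) h
      have h2 : x⁻¹ * (c z)⁻¹ = x'⁻¹ * (c z')⁻¹ := congrArg (fun p => (p.2 : Γ)) h
      have h3 : z = z' := by
        calc z = z * c z * x * (x⁻¹ * (c z)⁻¹) := by group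
          _ = z' * c z' * x' * (x'⁻¹ * (c z')⁻¹) := by rw [h1, h2]
          _ = z' := by group
      subst h3
      have h4 : x = x' := mul_left_cancel h1
      subst h4
      rfl
    · rintro ⟨⟨y, hy⟩, l, hl⟩
      have hz := hYL y hy l hl
      have hx : (c (y * l))⁻¹ * l⁻¹ ∈ K := by
        have : l * c (y * l) ∈ K := by
          refine hYY y hy _ (L.mul_mem hl (hcL _ hz)) ?_
          rw [← mul_assoc]
          exact hcY _ hz
        simpa using K.inv_mem this
      refine ⟨(⟨y * l, hz⟩, ⟨_, hx⟩), Prod.ext (Subtype.ext ?_) (Subtype.ext ?_)⟩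
      · change y * l * c (y * l) * ((c (y * l))⁻¹ * l⁻¹) = y
        group
      · change ((c (y * l))⁻¹ * l⁻¹)⁻¹ * (c (y * l))⁻¹ = l
        group
  have := Nat.card_eq_of_bijective F hF
  rw [Nat.card_prod, Nat.card_prod, Nat.card_coe_set_eq, Nat.card_coe_set_eq] at this
  exact this.symm

/-- When `Γ_n` is not prescribed to be broken, every left factor at level `n + 1` can be
moved into `G_n` by an element of `H_{n+1}`. -/
theorem ncard_leftFactorsOn_succ {k : ℕ} (hk : 0 < k) {m n : ℕ} (hmn : m ≤ n)
    {g₁ g₂ g : Equiv.Perm ℕ} (hg₁ : g₁ ∈ groupG k m) (hg₂ : g₂ ∈ groupG k m)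
    (hg : g ∈ groupG k m) {S : Finset ℕ} (hS : n ∉ S) :
    (leftFactorsOn k m n g₁ g₂ g S).ncard * Nat.card (groupH k (n + 1)) =
      (leftFactorsOn k m (n + 1) g₁ g₂ g S).ncard * Nat.card (groupH k n) := by
  have hg₁n := groupG_mono k hmn hg₁
  refine ncard_mul_card _ _ (groupH_mono k (Nat.le_succ n)) _ _
    (fun y hy x hx => leftFactorsOn_mul hk hy hx)
    (fun y hy l hl => leftFactorsOn_mul hk ⟨leftFactors_mono (Nat.le_succ n) _ _ _ hy.1, hy.2⟩ hl)
    ?_ ?_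
  · intro z hz
    have hzG := leftFactors_subset (groupG_mono k (Nat.le_succ n) hg₁n) hz.1
    obtain ⟨i, hi⟩ : ∃ i, MapsBlock k z i n := by
      by_contra! h
      exact hS ((hz.2 n hmn).1 h)
    obtain ⟨s, hs1, hs2, hs3⟩ := exists_straighten hi
    have hs := straighten_mem hk (mapsBlock_lt_of_mem_groupG hk hzG hi (Nat.lt_succ_self n))
      hs1 hs2
    have hzs := leftFactorsOn_mul hk hz hs
    refine ⟨s, hs, leftFactors_descend hk hg₁n (groupG_mono k hmn hg₂) (groupG_mono k hmn hg)
      (mem_groupG_of_succ hk ((groupG k (n + 1)).mul_mem hzG hs.1) hs3) hzs.1, hzs.2⟩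
  · intro y hy l hl hyl
    refine ⟨?_, hl.2⟩
    have := (groupG k n).mul_mem ((groupG k n).inv_mem (leftFactors_subset hg₁n hy.1))
      (leftFactors_subset hg₁n hyl.1)
    rwa [inv_mul_cancel_left] at this

theorem card_groupH_ne_zero {k : ℕ} (hk : 0 < k) (n : ℕ) : (Nat.card (groupH k n) : ℚ) ≠ 0 := by
  rw [card_groupH hk]
  positivity

/-- The number of left factors breaking exactly the blocks `Γ_m, …, Γ_{m+j-1}` beyond `m` is
a constant multiple of `|H_n|`. -/
theorem ncard_leftFactorsOn_eq {k : ℕ} (hk : 0 < k) {m : ℕ}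
    {g₁ g₂ g : Equiv.Perm ℕ} (hg₁ : g₁ ∈ groupG k m) (hg₂ : g₂ ∈ groupG k m)
    (hg : g ∈ groupG k m) (j : ℕ) : ∃ c : ℚ, ∀ n, m + j ≤ n →
    ((leftFactorsOn k m n g₁ g₂ g (Finset.Ico m (m + j))).ncard : ℚ) =
      c * Nat.card (groupH k n) := by
  refine ⟨(leftFactorsOn k m (m + j) g₁ g₂ g (Finset.Ico m (m + j))).ncard /
    Nat.card (groupH k (m + j)), fun n hn => ?_⟩
  induction n, hn using Nat.le_induction with
  | base => rw [div_mul_cancel₀ _ (card_groupH_ne_zero hk _)]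
  | succ n hn ih =>
    have h := ncard_leftFactorsOn_succ hk (show m ≤ n by omega) hg₁ hg₂ hg
      (S := Finset.Ico m (m + j)) (by simp; omega)
    have h' := congrArg (Nat.cast : ℕ → ℚ) h
    push_cast at h'
    rw [ih] at h'
    apply mul_right_cancel₀ (card_groupH_ne_zero hk n)
    rw [← h']
    ring

/-- Sorting the left factors by their broken blocks of index at least `m`. -/
theorem ncard_leftFactors {k : ℕ} (hk : 0 < k) {m n : ℕ} (hmn : m ≤ n)
    {g₁ g₂ g : Equiv.Perm ℕ} (hg₁ : g₁ ∈ groupG k m) (hg : g ∈ groupG k m) :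
    (leftFactors k n g₁ g₂ g).ncard = ∑ j ∈ Finset.range (n - m + 1),
      (n - m).choose j * (leftFactorsOn k m n g₁ g₂ g (Finset.Ico m (m + j))).ncard := by
  classical
  have hfin : (leftFactors k n g₁ g₂ g).Finite :=
    (finite_groupG n).subset (leftFactors_subset (groupG_mono k hmn hg₁))
  have h1 := Finset.card_eq_sum_card_fiberwise (s := hfin.toFinset)
    (t := (Finset.Ico m n).powerset)
    (f := fun a => (Finset.Ico m n).filter (· ∈ brokenBlocks k a))
    (fun a _ => Finset.mem_powerset.2 (Finset.filter_subset _ _))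
  have h2 : ∀ S ∈ (Finset.Ico m n).powerset, (hfin.toFinset.filter
      (fun a => (Finset.Ico m n).filter (· ∈ brokenBlocks k a) = S)).card =
      (leftFactorsOn k m n g₁ g₂ g (Finset.Ico m (m + S.card))).ncard := by
    intro S hS
    rw [Finset.mem_powerset] at hS
    have hcard := Finset.card_le_card hS
    rw [Nat.card_Ico] at hcard
    have hIco : Finset.Ico m (m + S.card) ⊆ Finset.Ico m n :=
      Finset.Ico_subset_Ico_right (by omega)
    have hcc : S.card = (Finset.Ico m (m + S.card)).card := by simp
    trans (leftFactorsOn k m n g₁ g₂ g S).ncard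
    · rw [← Set.ncard_coe_finset]
      congr 1
      ext a
      simp only [Finset.coe_filter, Set.Finite.mem_toFinset, Set.mem_ofPred_eq, leftFactorsOn,
        Finset.ext_iff, Finset.mem_filter, Finset.mem_Ico]
      refine and_congr_right fun ha => ⟨fun H j hj => ?_, fun H j => ?_⟩
      · rw [← H j]
        refine ⟨fun hjb => ⟨⟨hj, ?_⟩, hjb⟩, fun hjb => hjb.2⟩
        exact brokenBlocks_lt hk (leftFactors_subset (groupG_mono k hmn hg₁) ha) hjb
      · refine ⟨fun hj => (H j hj.1.1).1 hj.2, fun hj => ?_⟩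
        have hj' := Finset.mem_Ico.1 (hS hj)
        exact ⟨hj', (H j hj'.1).2 hj⟩
    · exact le_antisymm (ncard_leftFactorsOn_le hk hmn hg₁ hg hS hIco hcc)
        (ncard_leftFactorsOn_le hk hmn hg₁ hg hIco hS hcc.symm)
  rw [Set.ncard_eq_toFinset_card _ hfin, h1, Finset.sum_congr rfl h2,
    Finset.sum_powerset_apply_card
      (fun j => (leftFactorsOn k m n g₁ g₂ g (Finset.Ico m (m + j))).ncard), Nat.card_Ico]
  simp only [smul_eq_mul]

/-- Fix `k ≥ 2`, `m ∈ ℕ` and `g₁, g₂, g ∈ G_m`. There is a polynomial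
`P ∈ ℚ[X]` such that for every `n ≥ m`, the number of pairs `(a,b)` with
`a ∈ H_n·g₁·H_n`, `b ∈ H_n·g₂·H_n` and `a * b = g` equals `P(n) * n! * (k!)^n`:
the structure coefficients of the Hecke algebras of `(S_{kn}, S_k ≀ S_n)` are
polynomials in `n`. -/
theorem structure_coefficients_polynomial (k m : ℕ) (hk : 2 ≤ k)
    (g₁ g₂ g : Equiv.Perm ℕ) (hg₁ : InG k m g₁) (hg₂ : InG k m g₂) (hg : InG k m g) :
    ∃ P : Polynomial ℚ, ∀ n : ℕ, m ≤ n →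
      (Nat.card {ab : Equiv.Perm ℕ × Equiv.Perm ℕ |
          (∃ h₁ h₂ : Equiv.Perm ℕ, InH k n h₁ ∧ InH k n h₂ ∧ ab.1 = h₁ * g₁ * h₂) ∧
          (∃ h₁ h₂ : Equiv.Perm ℕ, InH k n h₁ ∧ InH k n h₂ ∧ ab.2 = h₁ * g₂ * h₂) ∧
          ab.1 * ab.2 = g} : ℚ) =
        P.eval (n : ℚ) * (n.factorial * k.factorial ^ n : ℕ) := by

  have hk0 : 0 < k := by omega
  have hcount : ∀ n, Nat.card {ab : Equiv.Perm ℕ × Equiv.Perm ℕ |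
      (∃ h₁ h₂ : Equiv.Perm ℕ, InH k n h₁ ∧ InH k n h₂ ∧ ab.1 = h₁ * g₁ * h₂) ∧
      (∃ h₁ h₂ : Equiv.Perm ℕ, InH k n h₁ ∧ InH k n h₂ ∧ ab.2 = h₁ * g₂ * h₂) ∧
      ab.1 * ab.2 = g} = (leftFactors k n g₁ g₂ g).ncard := by
    intro n
    rw [Nat.card_coe_set_eq, ← Set.ncard_image_of_injective (leftFactors k n g₁ g₂ g)
      (f := fun a => (a, a⁻¹ * g)) (fun a b h => congrArg Prod.fst h)]
    congr 1
    ext ⟨a, b⟩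
    simp only [Set.mem_ofPred_eq, Set.mem_image, leftFactors, mem_groupH hk0, Prod.mk.injEq]
    constructor
    · rintro ⟨⟨h, h', hh, hh', e⟩, ⟨l, l', hl, hl', e'⟩, rfl⟩
      exact ⟨a, ⟨⟨h, hh, h', hh', e⟩, l, hl, l', hl', by simpa using e'⟩, rfl, by simp⟩
    · rintro ⟨_, ⟨⟨h, hh, h', hh', e⟩, l, hl, l', hl', e'⟩, rfl, rfl⟩
      exact ⟨⟨h, h', hh, hh', e⟩, ⟨l, l', hl, hl', e'⟩, by simp⟩
  choose c hc using ncard_leftFactorsOn_eq hk0 hg₁ hg₂ hg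
  refine ⟨∑ j ∈ Finset.range (m + 1), Polynomial.C (c j / j.factorial) *
    (descPochhammer ℚ j).comp (Polynomial.X - Polynomial.C (m : ℚ)), fun n hn => ?_⟩
  have hterm : ∀ j, ((n - m).choose j *
      (leftFactorsOn k m n g₁ g₂ g (Finset.Ico m (m + j))).ncard : ℚ) =
      (n - m).choose j * c j * Nat.card (groupH k n) := by
    intro j
    rcases le_or_gt (m + j) n with h | h
    · rw [hc j n h, mul_assoc]
    · rw [Nat.choose_eq_zero_of_lt (by omega)]
      simp
  -- Both index ranges can be enlarged to a common one: the binomial coefficient vanishes for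
  -- `j > n - m`, the number of left factors for `j > m`.
  have hsum : ((leftFactors k n g₁ g₂ g).ncard : ℚ) =
      ∑ j ∈ Finset.range (m + 1), ((n - m).choose j * c j * Nat.card (groupH k n) : ℚ) := by
    rw [ncard_leftFactors hk0 hn hg₁ hg]
    push_cast
    simp only [← hterm]
    trans ∑ j ∈ Finset.range (n + m + 1), ((n - m).choose j *
      (leftFactorsOn k m n g₁ g₂ g (Finset.Ico m (m + j))).ncard : ℚ)
    · refine Finset.sum_subset (Finset.range_mono (by omega)) fun j _ hj => ?_
      rw [Finset.mem_range] at hj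
      rw [Nat.choose_eq_zero_of_lt (by omega)]
      simp
    · refine (Finset.sum_subset (Finset.range_mono (by omega)) fun j _ hj => ?_).symm
      rw [Finset.mem_range] at hj
      have : leftFactorsOn k m n g₁ g₂ g (Finset.Ico m (m + j)) = ∅ := by
        refine Set.eq_empty_of_forall_notMem fun a ha => ?_
        have := card_le_of_leftFactorsOn hk0 hg₁ (fun i hi => (Finset.mem_Ico.1 hi).1) ha
        rw [Nat.card_Ico] at this
        omega
      rw [this]
      simp
  rw [hcount, hsum, ← card_groupH hk0, ← Finset.sum_mul, Polynomial.eval_finsetSum]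
  congr 1
  refine Finset.sum_congr rfl fun j _ => ?_
  rw [Polynomial.eval_mul, Polynomial.eval_C, Polynomial.eval_comp, Polynomial.eval_sub,
    Polynomial.eval_X, Polynomial.eval_C, ← Nat.cast_sub hn,
    descPochhammer_eval_eq_descFactorial, Nat.descFactorial_eq_factorial_mul_choose]
  have : (j.factorial : ℚ) ≠ 0 := by positivity
  push_cast
  field_simp
end
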